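/- Let n ≥ 1 and let a x : Fin n → ℝ be arbitrary. Then the family indexed by strictly decreasing tuples k : Fin n → ℕ with every value k l odd, with term (∏_{l} (1 / (k l)!)) · D(a, k) · D(x, k), has sum equal to the determinant of the n×n matrix with (i,j) entry Real.sinh (a j * x i). (Determinant form of the hyperbolic sine example, from Theorem 1 with g(x) = sinh x; only partitions in P_{n,odd} contribute.) -/

import Mathlib

/-!
This is Cauchy–Binet with an infinite set of inner indices. If `M i j = ∑ l, A i l * B l j`
converges absolutely, multilinearity expands `det M` as a sum over all tuples `k`. Tuples with a
repeated entry contribute `0`, and every other tuple is a rearrangement of a unique strictly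
decreasing one; adding up the rearrangements of `k` gives the product of the `k`-minors of `A` and
`B`. For `M i j = ∑ m, c m * (a j * x i) ^ m` these minors are, up to the factors `c m`, the
determinants of powers of `x` and `a`.
-/

open Matrix Equiv

section TupleProducts

variable {R : Type*} [NormedCommRing R]

theorem summable_norm_prod_fin {n : ℕ} {κ : Fin n → Type*} {f : ∀ i, κ i → R}
    (hf : ∀ i, Summable fun l => ‖f i l‖) :
    Summable fun k : ∀ i, κ i => ‖∏ i, f i (k i)‖ := by
  induction n with
  | zero => exact (hasSum_fintype _).summable
  | succ n ih =>
    rw [← (Fin.consEquiv κ).summable_iff]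
    refine ((hf 0).mul_norm (ih fun i => hf i.succ)).congr fun k => ?_
    simp [Fin.prod_univ_succ, Fin.consEquiv]

theorem hasSum_prod_fin {n : ℕ} {κ : Fin n → Type*} {f : ∀ i, κ i → R} {s : Fin n → R}
    (hf : ∀ i, Summable fun l => ‖f i l‖) (hs : ∀ i, HasSum (f i) (s i)) :
    HasSum (fun k : ∀ i, κ i => ∏ i, f i (k i)) (∏ i, s i) := by
  induction n with
  | zero => simp
  | succ n ih =>
    have htail := ih (fun i => hf i.succ) fun i => hs i.succ
    have hmul := summable_mul_of_summable_norm' (hf 0) (hs 0).summable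
      (summable_norm_prod_fin fun i => hf i.succ) htail.summable
    rw [← (Fin.consEquiv κ).hasSum_iff, Fin.prod_univ_succ]
    refine ((hs 0).mul htail hmul).congr_fun fun k => ?_
    simp [Fin.prod_univ_succ, Fin.consEquiv]

theorem hasSum_prod_pi {ι : Type*} [Fintype ι] {κ : ι → Type*} {f : ∀ i, κ i → R} {s : ι → R}
    (hf : ∀ i, Summable fun l => ‖f i l‖) (hs : ∀ i, HasSum (f i) (s i)) :
    HasSum (fun k : ∀ i, κ i => ∏ i, f i (k i)) (∏ i, s i) := by
  let e := (Fintype.equivFin ι).symm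
  rw [← (e.piCongrLeft κ).hasSum_iff, ← e.prod_comp]
  refine (hasSum_prod_fin (fun i => hf (e i)) fun i => hs (e i)).congr_fun fun k => ?_
  simp [← e.prod_comp]

end TupleProducts

section Rearrangements

variable {κ : Type*} [LinearOrder κ] {n : ℕ}

theorem injective_strictAnti_comp_perm :
    Function.Injective
      fun p : {k : Fin n → κ // StrictAnti k} × Perm (Fin n) => p.1.1 ∘ p.2 := by
  rintro ⟨⟨k, hk⟩, σ⟩ ⟨⟨k', hk'⟩, σ'⟩ (h : k ∘ σ = k' ∘ σ')
  obtain rfl : k = k' := by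
    rw [← hk.range_inj hk', ← σ.surjective.range_comp k, h, σ'.surjective.range_comp]
  obtain rfl : σ = σ' := Equiv.ext fun i => hk.injective (congrFun h i)
  rfl

theorem range_strictAnti_comp_perm :
    (Set.range fun p : {k : Fin n → κ // StrictAnti k} × Perm (Fin n) => p.1.1 ∘ p.2) =
      {k | Function.Injective k} := by
  refine Set.Subset.antisymm ?_ fun k (hk : Function.Injective k) => ?_
  · rintro _ ⟨⟨k, σ⟩, rfl⟩
    exact k.2.injective.comp σ.injective
  · let σ := Tuple.sort (OrderDual.toDual ∘ k)
    have hanti : Antitone (k ∘ σ) := Tuple.monotone_sort (OrderDual.toDual ∘ k)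
    refine ⟨⟨⟨k ∘ σ, hanti.strictAnti_of_injective (hk.comp σ.injective)⟩, σ⁻¹⟩, ?_⟩
    ext i
    simp

end Rearrangements

section CauchyBinet

theorem sum_perm_det_submatrix_mul_prod {m κ R : Type*} [Fintype m] [DecidableEq m] [CommRing R]
    (A : Matrix m κ R) (B : Matrix κ m R) (k : m → κ) :
    ∑ σ : Perm m, (A.submatrix id (k ∘ σ)).det * ∏ j, B ((k ∘ σ) j) j =
      (A.submatrix id k).det * (B.submatrix k id).det := by
  have hA (σ : Perm m) :
      (A.submatrix id (k ∘ σ)).det = (Perm.sign σ : ℤ) * (A.submatrix id k).det :=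
    det_permute' σ (A.submatrix id k)
  rw [det_apply' (B.submatrix k id), Finset.mul_sum]
  refine Finset.sum_congr rfl fun σ _ => ?_
  simp only [hA, submatrix_apply, id, Function.comp_apply]
  ring

variable {R : Type*} [NormedCommRing R]

theorem hasSum_det_submatrix_mul_prod {m κ : Type*} [Fintype m] [DecidableEq m]
    {A : Matrix m κ R} {B : Matrix κ m R} {M : Matrix m m R}
    (hnorm : ∀ i j, Summable fun l => ‖A i l * B l j‖)
    (hM : ∀ i j, HasSum (fun l => A i l * B l j) (M i j)) :
    HasSum (fun k : m → κ => (A.submatrix id k).det * ∏ j, B (k j) j) M.det := by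
  rw [det_apply']
  have hperm (σ : Perm m) : HasSum
      (fun k : m → κ => (Perm.sign σ : ℤ) * ∏ j, A (σ j) (k j) * B (k j) j)
      ((Perm.sign σ : ℤ) * ∏ j, M (σ j) j) :=
    (hasSum_prod_pi (fun j => hnorm (σ j) j) fun j => hM (σ j) j).mul_left _
  refine (hasSum_sum fun σ _ => hperm σ).congr_fun fun k => ?_
  simp only [det_apply', submatrix_apply, id, Finset.sum_mul, Finset.prod_mul_distrib, mul_assoc]

theorem hasSum_det_submatrix_mul_det_submatrix {κ : Type*} [LinearOrder κ] {n : ℕ}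
    {A : Matrix (Fin n) κ R} {B : Matrix κ (Fin n) R} {M : Matrix (Fin n) (Fin n) R}
    (hnorm : ∀ i j, Summable fun l => ‖A i l * B l j‖)
    (hM : ∀ i j, HasSum (fun l => A i l * B l j) (M i j)) :
    HasSum
      (fun k : {k : Fin n → κ // StrictAnti k} =>
        (A.submatrix id k.1).det * (B.submatrix k.1 id).det)
      M.det := by
  have htuples := hasSum_det_submatrix_mul_prod hnorm hM
  rw [← injective_strictAnti_comp_perm.hasSum_iff] at htuples
  · refine (htuples.prod_fiberwise fun k => hasSum_fintype _).congr_fun fun k => ?_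
    exact (sum_perm_det_submatrix_mul_prod A B k.1).symm
  · intro k hk
    obtain ⟨i, j, hij, hne⟩ : ∃ i j, k i = k j ∧ i ≠ j := by
      simpa [range_strictAnti_comp_perm, Function.Injective] using hk
    rw [det_zero_of_column_eq hne fun l => by simp [hij], zero_mul]

end CauchyBinet

/-- Strictly decreasing tuples in the subtype `{m // p m}`, regarded as strictly decreasing tuples
in `κ` whose values satisfy `p`; it transports a sum over the former to the latter. -/
def strictAntiSubtypeEquiv {ι κ : Type*} [Preorder ι] [Preorder κ] (p : κ → Prop) :
    {k : ι → {m // p m} // StrictAnti k} ≃ {k : ι → κ // StrictAnti k ∧ ∀ l, p (k l)} where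
  toFun k := ⟨fun l => k.1 l, k.2, fun l => (k.1 l).2⟩
  invFun k := ⟨fun l => ⟨k.1 l, k.2.2 l⟩, k.2.1⟩

theorem hasSum_prod_coeff_mul_det_pow_mul_det_pow {R : Type*} [NormedCommRing R] {n : ℕ}
    {p : ℕ → Prop} {c : ℕ → R} {a x : Fin n → R} {M : Matrix (Fin n) (Fin n) R}
    (hnorm : ∀ i j, Summable fun m : {m // p m} => ‖c m * (a j * x i) ^ (m : ℕ)‖)
    (hM : ∀ i j, HasSum (fun m : {m // p m} => c m * (a j * x i) ^ (m : ℕ)) (M i j)) :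
    HasSum
      (fun k : {k : Fin n → ℕ // StrictAnti k ∧ ∀ l, p (k l)} =>
        (∏ l, c (k.1 l)) * (of fun i j => a i ^ k.1 j).det * (of fun i j => x i ^ k.1 j).det)
      M.det := by
  let A : Matrix (Fin n) {m // p m} R := of fun i m => x i ^ (m : ℕ)
  let B : Matrix {m // p m} (Fin n) R := of fun m j => c m * a j ^ (m : ℕ)
  have hentry (i j) (m : {m // p m}) : c m * (a j * x i) ^ (m : ℕ) = A i m * B m j := by
    simp only [A, B, of_apply]
    ring
  have hB (k : Fin n → {m // p m}) :
      (B.submatrix k id).det = (∏ l, c (k l)) * (of fun i j => a i ^ (k j : ℕ)).det := by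
    rw [← det_transpose (of fun i j => a i ^ (k j : ℕ)), ← det_mul_column]
    rfl
  simp only [hentry] at hnorm hM
  rw [← (strictAntiSubtypeEquiv p).hasSum_iff]
  refine (hasSum_det_submatrix_mul_det_submatrix hnorm hM).congr_fun fun k => ?_
  rw [hB, mul_comm]
  rfl

theorem hasSum_sinh_odd (r : ℝ) :
    HasSum (fun m : {m : ℕ // Odd m} => 1 / (Nat.factorial m : ℝ) * r ^ (m : ℕ)) (Real.sinh r) := by
  have hinj : Function.Injective fun m : ℕ => 2 * m + 1 := fun _ _ h => by simpa using h
  have hrange := hinj.hasSum_range_iff (f := fun m => 1 / (Nat.factorial m : ℝ) * r ^ m)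
    (a := Real.sinh r)
  rw [range_two_mul_add_one] at hrange
  refine hrange.2 ((Real.hasSum_sinh r).congr_fun fun m => ?_)
  exact one_div_mul_eq_div _ _

theorem cauchy_type_identity_sinh
    (n : ℕ) (hn : 1 ≤ n) (a x : Fin n → ℝ) :
    HasSum
      (fun k : {k : Fin n → ℕ // StrictAnti k ∧ ∀ l : Fin n, Odd (k l)} =>
        (∏ l : Fin n, (1 / (Nat.factorial (k.1 l) : ℝ))) *
          (Matrix.of fun i j : Fin n => (a i) ^ (k.1 j)).det *
          (Matrix.of fun i j : Fin n => (x i) ^ (k.1 j)).det)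
      (Matrix.of fun i j : Fin n => Real.sinh (a j * x i)).det :=
  hasSum_prod_coeff_mul_det_pow_mul_det_pow (c := fun m => 1 / (Nat.factorial m : ℝ))
    (fun i j => (hasSum_sinh_odd (a j * x i)).summable.norm)
    fun i j => hasSum_sinh_odd (a j * x i)
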